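/- Let d ≥ 0, let t = (t_1 ≤ t_2 ≤ … ≤ t_{N+d+1}) be a nondecreasing knot sequence such that t_k < t_{k+d+1} for every k with 1 ≤ k ≤ N (i.e. no knot occurs with multiplicity greater than d+1), and let B_{k,d} (1 ≤ k ≤ N) be the B-splines defined by the Cox–de Boor recursion on t. Then the functions B_{1,d}, …, B_{N,d} are linearly independent: if c_1, …, c_N are real numbers with ∑_{k=1}^{N} c_k B_{k,d}(x) = 0 for all x ∈ ℝ, then c_1 = … = c_N = 0. -/

import Mathlib

/-- The B-splines `B_{k,d}` on the knot sequence `t`, defined by the Cox–de Boor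
recursion: `B_{k,0}(x) = 1` if `t_k ≤ x < t_{k+1}` and `0` otherwise, and
`B_{k,d}(x) = ((x - t_k)/(t_{k+d} - t_k)) B_{k,d-1}(x)
  + ((t_{k+d+1} - x)/(t_{k+d+1} - t_{k+1})) B_{k+1,d-1}(x)`,
where any term whose denominator is zero is taken to be `0`. -/
noncomputable def coxDeBoor (t : ℕ → ℝ) : ℕ → ℕ → ℝ → ℝ
  | k, 0, x => if t k ≤ x ∧ x < t (k + 1) then 1 else 0
  | k, d + 1, x =>
      (if t (k + d + 1) = t k then 0
        else (x - t k) / (t (k + d + 1) - t k) * coxDeBoor t k d x) +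
      (if t (k + d + 2) = t (k + 1) then 0
        else (t (k + d + 2) - x) / (t (k + d + 2) - t (k + 1)) * coxDeBoor t (k + 1) d x)

/-!
Let `t_m` be the last of the knots `t_k, …, t_{k+d+1}` equal to `t_k`. To the right of `t_k` the
function `B_{k,d}(x)` behaves like a positive multiple of `(x - t_k) ^ (k + d - m)`: each of the
two terms of the Cox–de Boor recursion either vanishes identically there or has exactly this
order, and positive leading coefficients cannot cancel. A later `B_{j,d}` either starts at the
same point, where it vanishes to higher order because `j > k`, or starts further right. So each
B-spline dominates all later ones just to the right of its first knot, and in a vanishing linear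
combination the first nonzero coefficient would have to be zero.
-/

open Asymptotics Filter Set Topology

theorem linearIndepOn_of_isLittleO {ι α 𝕜 E : Type*} [LinearOrder ι] [NormedField 𝕜]
    [NormedAddCommGroup E] [NormedSpace 𝕜 E] {s : Set ι} {f : ι → α → E} {l : ι → Filter α}
    (hne : ∀ i ∈ s, ∃ᶠ x in l i, f i x ≠ 0)
    (hlittle : ∀ i ∈ s, ∀ j ∈ s, i < j → f j =o[l i] f i) : LinearIndepOn 𝕜 f s := by
  rw [linearIndepOn_iff']
  intro u c hus hsum
  by_contra! hc
  obtain ⟨i, ⟨hiu, hci⟩, hmin⟩ :=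
    (u.finite_toSet.subset (sep_subset _ (c · ≠ 0))).exists_minimal hc
  have hterm : ∀ j ∈ u.erase i, (c j • f j) =o[l i] f i := by
    intro j hj
    obtain ⟨hji, hju⟩ := Finset.mem_erase.mp hj
    by_cases hcj : c j = 0
    · rw [hcj, zero_smul]
      exact isLittleO_zero _ _
    · have hij : i < j :=
        lt_of_not_ge fun hji' => hji (hji'.antisymm (hmin ⟨hju, hcj⟩ hji'))
      exact (hlittle i (hus hiu) j (hus hju) hij).const_smul_left (c j)
  have hlead : c i • f i = -∑ j ∈ u.erase i, c j • f j :=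
    eq_neg_of_add_eq_zero_left ((Finset.add_sum_erase u _ hiu).trans hsum)
  have hself : (c i • f i) =o[l i] f i := hlead ▸ (IsLittleO.sum hterm).neg_left
  exact isLittleO_irrefl (hne i (hus hiu)) ((isLittleO_const_smul_left hci).mp hself)

theorem monotoneOn_eq_left_of_mem_Icc {α β : Type*} [Preorder α] [PartialOrder β] {f : α → β}
    {a b x : α} (hf : MonotoneOn f (Icc a b)) (hab : f b = f a) (hx : x ∈ Icc a b) : f x = f a := by
  have hle : a ≤ b := hx.1.trans hx.2
  exact le_antisymm (hab ▸ hf hx (right_mem_Icc.mpr hle) hx.2)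
    (hf (left_mem_Icc.mpr hle) hx hx.1)

theorem exists_last_eq_knot {α : Type*} [PartialOrder α] {t : ℕ → α} {k d : ℕ}
    (ht : MonotoneOn t (Icc k (k + d))) (hlt : t k < t (k + d + 1)) :
    ∃ m ∈ Icc k (k + d), t m = t k ∧ t k < t (m + 1) := by
  induction d with
  | zero => exact ⟨k, ⟨le_rfl, le_rfl⟩, rfl, hlt⟩
  | succ d ih =>
    rcases (ht ⟨le_rfl, by omega⟩ ⟨by omega, le_rfl⟩ (by omega)).eq_or_lt with heq | hlt'
    · exact ⟨k + (d + 1), ⟨by omega, le_rfl⟩, heq.symm, hlt⟩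
    · obtain ⟨m, hm, hmk⟩ := ih (ht.mono (Icc_subset_Icc_right (by omega))) hlt'
      exact ⟨m, ⟨hm.1, hm.2.trans (by omega)⟩, hmk⟩

/-- The convention that a term with denominator zero is zero is `x / 0 = 0`. -/
theorem coxDeBoor_succ (t : ℕ → ℝ) (k d : ℕ) :
    coxDeBoor t k (d + 1) = fun x =>
      (x - t k) / (t (k + d + 1) - t k) * coxDeBoor t k d x +
        (t (k + d + 2) - x) / (t (k + d + 2) - t (k + 1)) * coxDeBoor t (k + 1) d x := by
  funext x
  rw [coxDeBoor]
  split_ifs <;> simp [*]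

theorem coxDeBoor_eq_zero_of_lt {t : ℕ → ℝ} {k d : ℕ} {x : ℝ}
    (ht : MonotoneOn t (Icc k (k + d))) (hx : x < t k) : coxDeBoor t k d x = 0 := by
  induction d generalizing k with
  | zero => exact if_neg fun h => hx.not_ge h.1
  | succ d ih =>
    have hx' : x < t (k + 1) :=
      hx.trans_le (ht ⟨le_rfl, by omega⟩ ⟨by omega, by omega⟩ (Nat.le_succ k))
    simp only [coxDeBoor_succ, ih (ht.mono (Icc_subset_Icc_right (by omega))) hx,
      ih (ht.mono (Icc_subset_Icc (by omega) (by omega))) hx', mul_zero, add_zero]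

theorem coxDeBoor_eventuallyEq_zero {t : ℕ → ℝ} {k d : ℕ} {a : ℝ}
    (ht : MonotoneOn t (Icc k (k + d))) (ha : a < t k) : coxDeBoor t k d =ᶠ[𝓝[>] a] 0 :=
  mem_of_superset (Ioo_mem_nhdsGT ha) fun _ hx => coxDeBoor_eq_zero_of_lt ht hx.2

/-- To the right of `a`, the function `f` behaves like a positive multiple of `(x - a) ^ e`. Only
`x > a` matters, so the truncation of a B-spline at its left end does no harm. -/
def HasPosRightOrder (f : ℝ → ℝ) (a : ℝ) (e : ℕ) : Prop :=
  ∃ C > 0, Tendsto (fun x => f x / (x - a) ^ e) (𝓝[>] a) (𝓝 C)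

namespace HasPosRightOrder

variable {f g : ℝ → ℝ} {a b : ℝ} {e : ℕ}

theorem congr' (hf : HasPosRightOrder f a e) (hfg : f =ᶠ[𝓝[>] a] g) : HasPosRightOrder g a e :=
  let ⟨C, hC, hlim⟩ := hf
  ⟨C, hC, hlim.congr' (hfg.mono fun x hx => by rw [hx])⟩

theorem add (hf : HasPosRightOrder f a e) (hg : HasPosRightOrder g a e) :
    HasPosRightOrder (fun x => f x + g x) a e :=
  let ⟨C, hC, hfC⟩ := hf
  let ⟨D, hD, hgD⟩ := hg
  ⟨C + D, add_pos hC hD, by simpa only [add_div] using hfC.add hgD⟩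

theorem sub_left_div_mul (hf : HasPosRightOrder f a e) (hab : a < b) :
    HasPosRightOrder (fun x => (x - a) / (b - a) * f x) a (e + 1) := by
  obtain ⟨C, hC, hlim⟩ := hf
  refine ⟨C / (b - a), div_pos hC (sub_pos.mpr hab), (hlim.div_const (b - a)).congr' ?_⟩
  filter_upwards [self_mem_nhdsWithin] with x hx
  have hxa : x - a ≠ 0 := (sub_pos.mpr hx).ne'
  rw [pow_succ', div_mul_eq_mul_div, div_right_comm _ (b - a), mul_div_mul_left _ _ hxa,
    div_right_comm]

theorem sub_right_div_mul (hf : HasPosRightOrder f a e) (hab : a < b) :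
    HasPosRightOrder (fun x => (b - x) / (b - a) * f x) a e := by
  obtain ⟨C, hC, hlim⟩ := hf
  have hweight : Tendsto (fun x => (b - x) / (b - a)) (𝓝[>] a) (𝓝 ((b - a) / (b - a))) :=
    ((continuous_const.sub continuous_id).div_const _).continuousWithinAt
  rw [div_self (sub_pos.mpr hab).ne'] at hweight
  exact ⟨C, hC, by simpa only [mul_div_assoc, one_mul] using hweight.mul hlim⟩

theorem isTheta (hf : HasPosRightOrder f a e) : f =Θ[𝓝[>] a] fun x => (x - a) ^ e :=
  let ⟨_, hC, hlim⟩ := hf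
  (isTheta_of_div_tendsto_nhds_ne_zero hlim hC.ne').symm

theorem eventually_ne_zero (hf : HasPosRightOrder f a e) : ∀ᶠ x in 𝓝[>] a, f x ≠ 0 := by
  filter_upwards [hf.isTheta.eq_zero_iff, self_mem_nhdsWithin] with x hx hxa
  exact fun h => pow_ne_zero e (sub_pos.mpr hxa).ne' (hx.mp h)

theorem isLittleO {e' : ℕ} (hg : HasPosRightOrder g a e') (hf : HasPosRightOrder f a e)
    (he : e < e') : g =o[𝓝[>] a] f := by
  have hsub : Tendsto (fun x => x - a) (𝓝[>] a) (𝓝 0) :=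
    tendsto_sub_nhds_zero_iff.mpr nhdsWithin_le_nhds
  have hpow : (fun x => (x - a) ^ e') =o[𝓝[>] a] fun x => (x - a) ^ e :=
    (isLittleO_pow_pow he).comp_tendsto hsub
  exact (hg.isTheta.trans_isLittleO hpow).trans_isTheta hf.isTheta.symm

end HasPosRightOrder

theorem coxDeBoor_hasPosRightOrder {t : ℕ → ℝ} {k d m e : ℕ} (hkm : k ≤ m) (he : k + d = m + e)
    (ht : MonotoneOn t (Icc k (k + d + 1))) (hm : t m = t k) (hlt : t k < t (m + 1)) :
    HasPosRightOrder (coxDeBoor t k d) (t k) e := by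
  induction d generalizing k e with
  | zero =>
    obtain ⟨rfl, rfl⟩ : k = m ∧ e = 0 := by omega
    refine ⟨1, one_pos, tendsto_const_nhds.congr' ?_⟩
    filter_upwards [Ioo_mem_nhdsGT hlt] with x hx
    rw [coxDeBoor, if_pos ⟨hx.1.le, hx.2⟩, pow_zero, div_one]
  | succ d ih =>
    have hlt_of_lt : ∀ i, m < i → i ≤ k + d + 2 → t k < t i := fun i hmi hi =>
      hlt.trans_le (ht ⟨by omega, by omega⟩ ⟨by omega, hi⟩ hmi)
    have htr : MonotoneOn t (Icc (k + 1) (k + 1 + d + 1)) :=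
      ht.mono (Icc_subset_Icc (by omega) (by omega))
    have left : ∀ e', e = e' + 1 → HasPosRightOrder
        (fun x => (x - t k) / (t (k + d + 1) - t k) * coxDeBoor t k d x) (t k) e := by
      rintro e rfl
      have hord := ih (e := e) hkm (by omega) (ht.mono (Icc_subset_Icc_right (by omega))) hm hlt
      exact hord.sub_left_div_mul (hlt_of_lt (k + d + 1) (by omega) (by omega))
    have right : k < m → HasPosRightOrder
        (fun x => (t (k + d + 2) - x) / (t (k + d + 2) - t (k + 1)) * coxDeBoor t (k + 1) d x)
        (t k) e := by
      intro hkm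
      have hk : t (k + 1) = t k :=
        monotoneOn_eq_left_of_mem_Icc (ht.mono (Icc_subset_Icc_right (by omega))) hm
          ⟨Nat.le_succ k, hkm⟩
      have hord := ih (k := k + 1) (e := e) hkm (by omega) htr (hm.trans hk.symm) (hk ▸ hlt)
      rw [hk] at hord ⊢
      exact hord.sub_right_div_mul (hlt_of_lt (k + d + 2) (by omega) le_rfl)
    rw [coxDeBoor_succ]
    rcases hkm.eq_or_lt with rfl | hkm
    · refine (left d (by omega)).congr' ?_
      filter_upwards [coxDeBoor_eventuallyEq_zero
        (htr.mono (Icc_subset_Icc_right (Nat.le_succ _))) hlt] with x hx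
      rw [hx, Pi.zero_apply, mul_zero, add_zero]
    rcases e with _ | e
    · obtain rfl : k + d + 1 = m := he
      simpa only [hm, sub_self, div_zero, zero_mul, zero_add] using right hkm
    · exact (left e rfl).add (right hkm)

theorem coxDeBoor_eventually_ne_zero {t : ℕ → ℝ} {k d : ℕ}
    (ht : MonotoneOn t (Icc k (k + d + 1))) (hlt : t k < t (k + d + 1)) :
    ∀ᶠ x in 𝓝[>] t k, coxDeBoor t k d x ≠ 0 := by
  obtain ⟨m, ⟨hkm, hmd⟩, hm, hm'⟩ :=
    exists_last_eq_knot (ht.mono (Icc_subset_Icc_right (by omega))) hlt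
  obtain ⟨e, he⟩ := Nat.exists_eq_add_of_le hmd
  exact (coxDeBoor_hasPosRightOrder hkm he ht hm hm').eventually_ne_zero

theorem coxDeBoor_isLittleO_of_lt {t : ℕ → ℝ} {k j d : ℕ} (hkj : k < j)
    (ht : MonotoneOn t (Icc k (j + d + 1))) (hlt : t k < t (k + d + 1)) :
    coxDeBoor t j d =o[𝓝[>] t k] coxDeBoor t k d := by
  have htk : MonotoneOn t (Icc k (k + d + 1)) := ht.mono (Icc_subset_Icc_right (by omega))
  have htj : MonotoneOn t (Icc j (j + d + 1)) := ht.mono (Icc_subset_Icc_left hkj.le)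
  obtain ⟨m, ⟨hkm, hmd⟩, hm, hm'⟩ :=
    exists_last_eq_knot (htk.mono (Icc_subset_Icc_right (by omega))) hlt
  rcases (ht ⟨le_rfl, by omega⟩ ⟨hkj.le, by omega⟩ hkj.le).eq_or_lt with heq | hlt_j
  · have hjm : j ≤ m := by
      by_contra! h
      exact (hm'.trans_le (ht ⟨by omega, by omega⟩ ⟨by omega, by omega⟩ h)).ne heq
    obtain ⟨e, he⟩ := Nat.exists_eq_add_of_le hmd
    obtain ⟨e', he'⟩ : ∃ e', j + d = m + e' := Nat.exists_eq_add_of_le (by omega)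
    have hord := coxDeBoor_hasPosRightOrder hjm he' htj (hm.trans heq) (heq ▸ hm')
    rw [← heq] at hord
    exact hord.isLittleO (coxDeBoor_hasPosRightOrder hkm he htk hm hm') (by omega)
  · exact (isLittleO_zero _ _).congr'
      (coxDeBoor_eventuallyEq_zero (htj.mono (Icc_subset_Icc_right (by omega))) hlt_j).symm .rfl

/-- Linear independence of B-splines: on a nondecreasing knot sequence
`t_1 ≤ … ≤ t_{N+d+1}` in which `t_k < t_{k+d+1}` for all `1 ≤ k ≤ N`, the
B-splines `B_{1,d}, …, B_{N,d}` are linearly independent. -/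
theorem coxDeBoor_linearIndependent (N d : ℕ) (t : ℕ → ℝ)
    (hmono : ∀ i : ℕ, 1 ≤ i → i < N + d + 1 → t i ≤ t (i + 1))
    (hmult : ∀ k : ℕ, 1 ≤ k → k ≤ N → t k < t (k + d + 1))
    (c : ℕ → ℝ)
    (hc : ∀ x : ℝ, ∑ k ∈ Finset.Icc 1 N, c k * coxDeBoor t k d x = 0) :
    ∀ k : ℕ, 1 ≤ k → k ≤ N → c k = 0 := by
  have ht : MonotoneOn t (Icc 1 (N + d + 1)) :=
    monotoneOn_of_le_add_one ordConnected_Icc fun i _ hi hi' => hmono i hi.1 hi'.2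
  have hind : LinearIndepOn ℝ (fun k => coxDeBoor t k d) (Icc 1 N) := by
    refine linearIndepOn_of_isLittleO (l := fun k => 𝓝[>] t k) ?_ ?_
    · rintro k ⟨hk, hkN⟩
      exact (coxDeBoor_eventually_ne_zero (ht.mono (Icc_subset_Icc hk (by omega)))
        (hmult k hk hkN)).frequently
    · rintro k ⟨hk, hkN⟩ j ⟨-, hjN⟩ hkj
      exact coxDeBoor_isLittleO_of_lt hkj (ht.mono (Icc_subset_Icc hk (by omega)))
        (hmult k hk hkN)
  rw [← Finset.coe_Icc, linearIndepOn_finset_iff] at hind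
  intro k hk hkN
  refine hind c ?_ k (Finset.mem_Icc.mpr ⟨hk, hkN⟩)
  funext x
  simpa only [Finset.sum_apply, Pi.smul_apply, smul_eq_mul, Pi.zero_apply] using hc x
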